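/- Let X and Y be irreducible excellent Noetherian schemes and f : X → Y a dominant morphism of finite type. Then there exists a nonempty Zariski open subscheme V of Y such that X_V = X ×_Y V is generically dimensional, i.e., every nonempty open subscheme U of X_V satisfies dim U = dim X_V. -/

import Mathlib

open AlgebraicGeometry CategoryTheory CategoryTheory.Limits

universe u

/-- A stand-in for the class of excellent schemes (not yet in Mathlib): a scheme all of
whose local rings are excellent. -/
class IsExcellent (X : Scheme.{u}) : Prop where

/-- An irreducible scheme `Z` is *generically dimensional* if every nonempty Zariski open
subscheme `U` of `Z` satisfies `dim U = dim Z` (Krull dimension of the underlying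
topological spaces). -/
def GenericallyDimensional (Z : Scheme.{u}) : Prop :=
  ∀ U : Z.Opens, (U : Set Z).Nonempty →
    topologicalKrullDim (U : Set Z) = topologicalKrullDim Z

/-!
Restricting to the image of `f`, and from `X` to its integral closed subscheme with the same
points, we may assume `X` and `Y` integral. Over an affine open `Spec A` of `Y`, generic Noether
normalization shows that every nonempty affine open `U` of `X` becomes finite over
`A[x_1, ..., x_e]` after inverting a nonzero `s : A`, so that the part of `U` over `D(t)` has the
dimension of `A[x_1, ..., x_e]_t` whenever `s ∣ t`. Here `e` is the transcendence degree of the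
function field of `X`, which does not depend on `U`. Choosing `t` such that `A[x_1, ..., x_e]_t`
has minimal dimension makes this number independent of `t` as well, even though `s` depends on `U`.
-/

open TopologicalSpace

section

open MvPolynomial

theorem ringKrullDim_eq_of_isIntegral (R S : Type*) [CommRing R] [CommRing S] [Algebra R S]
    [FaithfulSMul R S] [Algebra.IsIntegral R S] : ringKrullDim S = ringKrullDim R := by
  apply le_antisymm
  · exact Order.krullDim_le_of_strictMono (PrimeSpectrum.comap (algebraMap R S)) fun I J hIJ ↦
      Ideal.IsIntegral.comap_lt_comap (R := R) (I := I.asIdeal) (J := J.asIdeal) hIJ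
  · refine iSup_le fun l ↦ ?_
    obtain ⟨Q, -, hQprime, hQ⟩ := Ideal.exists_ideal_over_prime_of_isIntegral (S := S)
      l.head.asIdeal ⊥ (by simp [← RingHom.ker_eq_comap_bot])
    have : Q.LiesOver l.head.asIdeal := ⟨hQ.symm⟩
    obtain ⟨L, hL, -⟩ := Ideal.exists_ltSeries_of_hasGoingUp (S := S) l Q
    exact hL ▸ Order.LTSeries.length_le_krullDim L

theorem topologicalKrullDim_basicOpen {R : Type*} [CommRing R] (a : R) :
    topologicalKrullDim (PrimeSpectrum.basicOpen a : Set (PrimeSpectrum R)) =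
      ringKrullDim (Localization.Away a) := by
  rw [← PrimeSpectrum.topologicalKrullDim_eq_ringKrullDim,
    ← PrimeSpectrum.localization_away_comap_range (Localization.Away a) a]
  have hemb := PrimeSpectrum.localization_away_isOpenEmbedding (Localization.Away a) a
  exact (IsHomeomorph.topologicalKrullDim_eq _ hemb.toIsEmbedding.toHomeomorph.isHomeomorph).symm

theorem ringKrullDim_localization_away_le_of_dvd {R : Type*} [CommRing R] {a b : R} (h : a ∣ b) :
    ringKrullDim (Localization.Away b) ≤ ringKrullDim (Localization.Away a) := by
  have hle : PrimeSpectrum.basicOpen b ≤ PrimeSpectrum.basicOpen a := by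
    obtain ⟨c, rfl⟩ := h
    exact PrimeSpectrum.basicOpen_mul_le_left a c
  simpa only [topologicalKrullDim_basicOpen] using
    (Topology.IsEmbedding.inclusion hle).isInducing.topologicalKrullDim_le

theorem isIntegral_of_isLocalization_away {R S Rₜ Sₜ : Type*} [CommRing R] [CommRing S]
    [CommRing Rₜ] [CommRing Sₜ] [Algebra R S] [Algebra R Rₜ] [Algebra S Sₜ] [Algebra R Sₜ]
    [Algebra Rₜ Sₜ] [IsScalarTower R S Sₜ] [IsScalarTower R Rₜ Sₜ] (t : R)
    [IsLocalization.Away t Rₜ] [IsLocalization.Away (algebraMap R S t) Sₜ] {G : Set S}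
    (hG : Algebra.adjoin R G = ⊤) (hint : ∀ x ∈ G, IsIntegral R (t • x)) :
    Algebra.IsIntegral Rₜ Sₜ := by
  let t' := algebraMap Rₜ Sₜ (algebraMap R Rₜ t)
  have ht' : t' = algebraMap S Sₜ (algebraMap R S t) := by
    simp only [t', ← IsScalarTower.algebraMap_apply]
  let r := IsLocalization.Away.invSelf (S := Rₜ) t
  have hr : algebraMap Rₜ Sₜ r * t' = 1 := by
    rw [← map_mul, mul_comm, IsLocalization.Away.mul_invSelf, map_one]
  have hS : Algebra.adjoin R G ≤
      ((integralClosure Rₜ Sₜ).restrictScalars R).comap (IsScalarTower.toAlgHom R S Sₜ) := by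
    refine Algebra.adjoin_le fun x hx ↦ IsIntegral.of_mul_unit hr ?_
    have := ((hint x hx).map (IsScalarTower.toAlgHom R S Sₜ)).tower_top (A := Rₜ)
    rwa [Algebra.smul_def, mul_comm, map_mul, IsScalarTower.coe_toAlgHom', ← ht'] at this
  refine ⟨fun y ↦ ?_⟩
  obtain ⟨n, x, hx⟩ := IsLocalization.Away.surj (algebraMap R S t) y
  refine IsIntegral.of_mul_unit (r := r ^ n) (y := t' ^ n) ?_ ?_
  · rw [map_pow, ← mul_pow, hr, one_pow]
  · rw [ht', hx]
    exact hS (hG ▸ Algebra.mem_top)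

theorem ringKrullDim_localization_away_algebraMap {R S : Type*} [CommRing R] [CommRing S]
    [Algebra R S] [FaithfulSMul R S] (t : R) {G : Set S} (hG : Algebra.adjoin R G = ⊤)
    (hint : ∀ x ∈ G, IsIntegral R (t • x)) :
    ringKrullDim (Localization.Away (algebraMap R S t)) = ringKrullDim (Localization.Away t) := by
  let _ : Algebra (Localization.Away t) (Localization.Away (algebraMap R S t)) :=
    (Localization.awayMap (algebraMap R S) t).toAlgebra
  have : IsScalarTower R (Localization.Away t) (Localization.Away (algebraMap R S t)) :=
    .of_algebraMap_eq fun x ↦ by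
      simp [RingHom.algebraMap_toAlgebra, Localization.awayMap, IsLocalization.Away.map,
        ← IsScalarTower.algebraMap_apply]
  have : Algebra.IsIntegral (Localization.Away t) (Localization.Away (algebraMap R S t)) :=
    isIntegral_of_isLocalization_away t hG hint
  have : FaithfulSMul (Localization.Away t) (Localization.Away (algebraMap R S t)) := by
    rw [faithfulSMul_iff_algebraMap_injective, RingHom.algebraMap_toAlgebra,
      Localization.awayMap_injective_iff]
    exact fun a ha ↦ ⟨0, by simpa using ha⟩
  exact ringKrullDim_eq_of_isIntegral _ _

/-- The automorphism of `R[X_i : i ∈ σ]` fixing `R` and sending each `X_i` to `u X_i`. It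
serves to clear denominators in a Noether normalization. -/
noncomputable def scaleVariables (σ : Type*) {R : Type*} [CommRing R] (u : Rˣ) :
    MvPolynomial σ R ≃ₐ[R] MvPolynomial σ R :=
  AlgEquiv.ofAlgHom (aeval fun i ↦ u.val • X i) (aeval fun i ↦ u⁻¹.val • X i)
    (by ext i : 1; simp [smul_smul]) (by ext i : 1; simp [smul_smul])

theorem scaleVariables_X {σ R : Type*} [CommRing R] (u : Rˣ) (i : σ) :
    scaleVariables σ u (X i) = u.val • X i := by
  simp [scaleVariables]

theorem exists_algHom_injective_isIntegral_forall_X_mem_range (A K B L : Type*) [CommRing A]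
    [Field K] [CommRing B] [CommRing L] [Nontrivial L] [Algebra A K] [IsFractionRing A K]
    [Algebra A B] [Algebra B L] [Algebra A L] [Algebra K L] [IsScalarTower A K L]
    [IsScalarTower A B L]
    [IsLocalization (Algebra.algebraMapSubmonoid B (nonZeroDivisors A)) L]
    [Algebra.FiniteType K L] :
    ∃ (e : ℕ) (g : MvPolynomial (Fin e) K →ₐ[K] L), Function.Injective g ∧ g.IsIntegral ∧
      ∀ i, g (X i) ∈ (algebraMap B L).range := by
  obtain ⟨e, g, hinj, hint⟩ := exists_integral_inj_algHom_of_fg K L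
  obtain ⟨⟨_, a, ha, rfl⟩, hx⟩ := IsLocalization.exist_integer_multiples_of_finite
    (Algebra.algebraMapSubmonoid B (nonZeroDivisors A)) (fun i ↦ g (X i))
  have ha' : IsUnit (algebraMap A K a) := IsLocalization.map_units K ⟨a, ha⟩
  refine ⟨e, g.comp (scaleVariables (Fin e) ha'.unit), hinj.comp (AlgEquiv.injective _),
    RingHom.IsIntegral.trans _ _ (RingHom.isIntegral_of_surjective _ (AlgEquiv.surjective _)) hint,
    fun i ↦ ?_⟩
  obtain ⟨x, hx⟩ := hx i
  refine ⟨x, ?_⟩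
  simpa [scaleVariables_X, Algebra.smul_def, ← IsScalarTower.algebraMap_apply] using hx

theorem exists_isIntegralElem_smul {σ A K B L : Type*} [CommRing A] [Field K] [CommRing B]
    [CommRing L] [Algebra A K] [IsFractionRing A K] [Algebra A B] [Algebra B L]
    [Algebra K L] (hBL : Function.Injective (algebraMap B L)) {g : MvPolynomial σ K →ₐ[K] L}
    {h : MvPolynomial σ A →ₐ[A] B}
    (hgh : ∀ p, algebraMap B L (h p) = g (map (algebraMap A K) p)) (hg : g.IsIntegral) (b : B) :
    ∃ a : A, a ≠ 0 ∧ h.toRingHom.IsIntegralElem (a • b) := by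
  have : Nontrivial A := (algebraMap A K).domain_nontrivial
  algebraize [g.toRingHom, h.toRingHom]
  let _ : Algebra (MvPolynomial σ A) (MvPolynomial σ K) := algebraMvPolynomial
  let _ : Algebra (MvPolynomial σ A) L := ((algebraMap B L).comp h.toRingHom).toAlgebra
  have : IsScalarTower (MvPolynomial σ A) B L := .of_algebraMap_eq fun _ ↦ rfl
  have : IsScalarTower (MvPolynomial σ A) (MvPolynomial σ K) L := .of_algebraMap_eq hgh
  have : IsScalarTower A (MvPolynomial σ A) B := .of_algebraMap_eq' h.comp_algebraMap.symm
  obtain ⟨⟨_, a, ha, rfl⟩, hab⟩ := IsIntegral.exists_multiple_integral_of_isLocalization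
    ((nonZeroDivisors A).map (C (σ := σ))) (algebraMap B L b) (hg _)
  refine ⟨a, nonZeroDivisors.ne_zero ha, ?_⟩
  change IsIntegral (MvPolynomial σ A) (a • b)
  rw [← isIntegral_algebraMap_iff hBL, ← algebraMap_smul (MvPolynomial σ A) a b, algebraMap_eq]
  exact (map_smul (IsScalarTower.toAlgHom (MvPolynomial σ A) B L) (C a) b).symm ▸ hab

theorem exists_algHom_injective_forall_isIntegralElem_smul (A B : Type u) [CommRing A] [IsDomain A]
    [CommRing B] [IsDomain B] [Algebra A B] [FaithfulSMul A B] [Algebra.FiniteType A B] :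
    ∃ (e : ℕ) (h : MvPolynomial (Fin e) A →ₐ[A] B), Function.Injective h ∧
      ∀ b : B, ∃ a : A, a ≠ 0 ∧ h.toRingHom.IsIntegralElem (a • b) := by
  let K := FractionRing A
  let M := Algebra.algebraMapSubmonoid B (nonZeroDivisors A)
  let L := Localization M
  have hM : M ≤ nonZeroDivisors B := map_le_nonZeroDivisors_of_injective _
    (FaithfulSMul.algebraMap_injective A B) le_rfl
  have : IsDomain L := IsLocalization.isDomain_localization hM
  have hBL : Function.Injective (algebraMap B L) := IsLocalization.injective L hM
  have : Algebra.FiniteType K L := by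
    have : IsLocalization ((nonZeroDivisors A).map (algebraMap A B)) L :=
      inferInstanceAs (IsLocalization M L)
    exact RingHom.finiteType_localizationPreserves (algebraMap A B) (nonZeroDivisors A) K L
      (RingHom.finiteType_algebraMap.mpr inferInstance)
  obtain ⟨e, g, hginj, hgint, hgX⟩ :=
    exists_algHom_injective_isIntegral_forall_X_mem_range A K B L
  choose x hx using hgX
  have hgh (p : MvPolynomial (Fin e) A) :
      algebraMap B L (aeval x p) = g (map (algebraMap A K) p) := by
    have : (IsScalarTower.toAlgHom A B L).comp (aeval x) =
        (g.restrictScalars A).comp (mapAlgHom (Algebra.ofId A K)) := by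
      ext i
      simp [hx]
    exact DFunLike.congr_fun this p
  refine ⟨e, aeval x, fun p q hpq ↦ ?_, exists_isIntegralElem_smul hBL hgh hgint⟩
  apply map_injective _ (IsFractionRing.injective A K)
  apply hginj
  rw [← hgh, ← hgh, hpq]

theorem trdeg_eq_of_isIntegralElem_smul {A B : Type u} [CommRing A] [IsDomain A] [CommRing B]
    [IsDomain B] [Algebra A B] {e : ℕ} (h : MvPolynomial (Fin e) A →ₐ[A] B)
    (hinj : Function.Injective h)
    (hint : ∀ b : B, ∃ a : A, a ≠ 0 ∧ h.toRingHom.IsIntegralElem (a • b)) :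
    Algebra.trdeg A B = e := by
  algebraize [h.toRingHom]
  have : IsScalarTower A (MvPolynomial (Fin e) A) B := .of_algebraMap_eq' h.comp_algebraMap.symm
  have : FaithfulSMul (MvPolynomial (Fin e) A) B :=
    (faithfulSMul_iff_algebraMap_injective _ _).mpr hinj
  have : Algebra.IsAlgebraic (MvPolynomial (Fin e) A) B := by
    refine ⟨fun b ↦ IsAlgebraic.iff_exists_smul_integral.mpr ?_⟩
    obtain ⟨a, ha, hab⟩ := hint b
    exact ⟨C a, by simpa using ha, by rwa [← algebraMap_eq, algebraMap_smul]⟩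
  have := trdeg_add_eq A (MvPolynomial (Fin e) A) (A := B)
  rw [← this, MvPolynomial.trdeg_of_isDomain, trdeg_eq_zero, add_zero, Cardinal.lift_mk_fin]

theorem trdeg_eq_trdeg_of_isFractionRing (A B K : Type u) [CommRing A] [CommRing B]
    [Field K] [Algebra A B] [FaithfulSMul A B] [Algebra B K] [Algebra A K] [IsScalarTower A B K]
    [IsFractionRing B K] : Algebra.trdeg A B = Algebra.trdeg A K := by
  have : IsDomain B := (IsFractionRing.injective B K).isDomain (algebraMap B K)
  have : Nontrivial A := (algebraMap A B).domain_nontrivial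
  have : Algebra.IsAlgebraic B K := IsLocalization.isAlgebraic K (nonZeroDivisors B)
  have := trdeg_add_eq A B (A := K)
  rwa [trdeg_eq_zero (R := B), add_zero] at this

theorem exists_forall_ringKrullDim_localization_away_eq (A B : Type u) [CommRing A] [IsDomain A]
    [CommRing B] [IsDomain B] [Algebra A B] [FaithfulSMul A B] [Algebra.FiniteType A B] :
    ∃ s : A, s ≠ 0 ∧ ∀ t : A, s ∣ t → ringKrullDim (Localization.Away (algebraMap A B t)) =
      ringKrullDim (Localization.Away
        (C t : MvPolynomial (Fin (Cardinal.toNat (Algebra.trdeg A B))) A)) := by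
  obtain ⟨e, h, hinj, hint⟩ := exists_algHom_injective_forall_isIntegralElem_smul A B
  rw [trdeg_eq_of_isIntegralElem_smul h hinj hint, Cardinal.toNat_natCast]
  obtain ⟨G, hG⟩ := (Algebra.FiniteType.out : (⊤ : Subalgebra A B).FG)
  choose a ha hint using hint
  refine ⟨∏ b ∈ G, a b, Finset.prod_ne_zero_iff.mpr fun b _ ↦ ha b, fun t hst ↦ ?_⟩
  algebraize [h.toRingHom]
  have : IsScalarTower A (MvPolynomial (Fin e) A) B := .of_algebraMap_eq' h.comp_algebraMap.symm
  have : FaithfulSMul (MvPolynomial (Fin e) A) B :=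
    (faithfulSMul_iff_algebraMap_injective _ _).mpr hinj
  rw [IsScalarTower.algebraMap_apply A (MvPolynomial (Fin e) A) B, algebraMap_eq]
  refine ringKrullDim_localization_away_algebraMap (C t) (G := G) ?_ fun b hb ↦ ?_
  · have hle : Algebra.adjoin A G ≤
        (Algebra.adjoin (MvPolynomial (Fin e) A) (G : Set B)).restrictScalars A :=
      Algebra.adjoin_le Algebra.subset_adjoin
    exact eq_top_iff.mpr fun b _ ↦ hle (hG ▸ Algebra.mem_top)
  · obtain ⟨c, rfl⟩ := (Finset.dvd_prod_of_mem a hb).trans hst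
    have hab : IsIntegral (MvPolynomial (Fin e) A) (a b • b) := hint b
    rw [← algebraMap_eq, algebraMap_smul, mul_comm, mul_smul,
      ← algebraMap_smul (MvPolynomial (Fin e) A) c]
    exact hab.smul _

theorem exists_forall_ringKrullDim_localization_away_C_eq (A : Type*) [CommRing A] [Nontrivial A]
    (σ : Type*) : ∃ r : A, r ≠ 0 ∧ ∀ t : A, t ≠ 0 → r ∣ t →
      ringKrullDim (Localization.Away (C t : MvPolynomial σ A)) =
        ringKrullDim (Localization.Away (C r : MvPolynomial σ A)) := by
  let d (t : A) : WithBot ℕ∞ := ringKrullDim (Localization.Away (C t : MvPolynomial σ A))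
  have hne : {t : A | t ≠ 0}.Nonempty := ⟨1, one_ne_zero⟩
  refine ⟨Function.argminOn d _ hne, Function.argminOn_mem d _ hne, fun t ht hrt ↦
    le_antisymm ?_ ?_⟩
  · exact ringKrullDim_localization_away_le_of_dvd (map_dvd C hrt)
  · exact Function.argminOn_le d _ ht

end

theorem topologicalKrullDim_mono {T : Type*} [TopologicalSpace T] {s t : Set T} (h : s ⊆ t) :
    topologicalKrullDim s ≤ topologicalKrullDim t :=
  (Topology.IsEmbedding.inclusion h).isInducing.topologicalKrullDim_le

theorem topologicalKrullDim_image {S T : Type*} [TopologicalSpace S] [TopologicalSpace T]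
    {i : S → T} (hi : Topology.IsEmbedding i) (s : Set S) :
    topologicalKrullDim (i '' s) = topologicalKrullDim s :=
  (IsHomeomorph.topologicalKrullDim_eq _ (hi.homeomorphImage s).isHomeomorph).symm

theorem topologicalKrullDim_le_of_isOpenCover {T : Type*} [TopologicalSpace T] {ι : Type*}
    {U : ι → Opens T} (hU : IsOpenCover U) {d : WithBot ℕ∞}
    (hd : ∀ i, topologicalKrullDim (U i) ≤ d) : topologicalKrullDim T ≤ d := by
  rw [topologicalKrullDim, Order.krullDim_eq_iSup_coheight]
  refine iSup_le fun Z ↦ ?_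
  obtain ⟨x, hx⟩ := Z.isIrreducible.nonempty
  obtain ⟨i, hi⟩ := hU.exists_mem x
  have hemb := (U i).isOpenEmbedding'
  let e := IrreducibleCloseds.orderIsoOfIsOpenEmbedding _ hemb
  let Z' := e.symm ⟨Z, ⟨⟨x, hi⟩, hx⟩⟩
  have hZ' : IrreducibleCloseds.map _ hemb.continuous Z' = Z :=
    congrArg Subtype.val (e.apply_symm_apply _)
  calc (Order.coheight Z : WithBot ℕ∞)
      = Order.coheight Z' := by rw [← hemb.coheight_map Z', hZ']
    _ ≤ topologicalKrullDim (U i) := Order.coheight_le_krullDim Z'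
    _ ≤ d := hd i

theorem topologicalKrullDim_le_of_le_iSup {T : Type*} [TopologicalSpace T] {ι : Type*}
    {U : ι → Opens T} {W : Opens T} (hW : W ≤ ⨆ i, U i) {d : WithBot ℕ∞}
    (hd : ∀ i, topologicalKrullDim (U i ⊓ W : Opens T) ≤ d) : topologicalKrullDim W ≤ d := by
  refine topologicalKrullDim_le_of_isOpenCover
    (U := fun i ↦ (U i).comap ⟨Subtype.val, continuous_subtype_val⟩) ?_ fun i ↦ ?_
  · exact .mk (eq_top_iff.mpr fun x _ ↦ by simpa using hW x.2)
  · have := topologicalKrullDim_image .subtypeVal (Subtype.val ⁻¹' U i : Set (W : Set T))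
    rw [Subtype.image_preimage_coe, Set.inter_comm] at this
    exact this.ge.trans (hd i)

theorem GenericallyDimensional.of_homeomorph {Z W : Scheme.{u}} (e : Z ≃ₜ W)
    (hZ : GenericallyDimensional Z) : GenericallyDimensional W := fun U hU ↦ by
  have := hZ (U.comap ⟨e, e.continuous⟩) (hU.preimage e.surjective)
  rw [← IsHomeomorph.topologicalKrullDim_eq _ e.isHomeomorph, ← this]
  change _ = topologicalKrullDim (e ⁻¹' U)
  rw [← topologicalKrullDim_image e.isEmbedding, e.image_preimage]

theorem GenericallyDimensional.of_isClosedImmersion_of_surjective {Z W : Scheme.{u}} (i : Z ⟶ W)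
    [IsClosedImmersion i] [Surjective i] (hZ : GenericallyDimensional Z) :
    GenericallyDimensional W :=
  hZ.of_homeomorph (i.isClosedEmbedding.isEmbedding.toHomeomorphOfSurjective i.surjective)

theorem genericallyDimensional_toScheme {X : Scheme.{u}} {U : X.Opens}
    (hU : ∀ W ≤ U, (W : Set X).Nonempty → topologicalKrullDim U ≤ topologicalKrullDim W) :
    GenericallyDimensional U := fun W hW ↦ by
  refine le_antisymm (topologicalKrullDim_subspace_le U W) ?_
  refine (hU (U.ι ''ᵁ W) (U.ι_image_le W) (hW.image U.ι)).trans_eq ?_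
  exact topologicalKrullDim_image U.ι.isOpenEmbedding.isEmbedding W

open MvPolynomial (C)

theorem topologicalKrullDim_eq_ringKrullDim_of_isAffineOpen {X : Scheme.{u}} {U : X.Opens}
    (hU : IsAffineOpen U) : topologicalKrullDim U = ringKrullDim Γ(X, U) := by
  rw [← PrimeSpectrum.topologicalKrullDim_eq_ringKrullDim]
  exact IsHomeomorph.topologicalKrullDim_eq _ (Scheme.homeoOfIso hU.isoSpec).isHomeomorph

theorem topologicalKrullDim_basicOpen_of_isAffineOpen {X : Scheme.{u}} {U : X.Opens}
    (hU : IsAffineOpen U) (g : Γ(X, U)) :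
    topologicalKrullDim (X.basicOpen g) = ringKrullDim (Localization.Away g) := by
  have := hU.isLocalization_basicOpen g
  rw [topologicalKrullDim_eq_ringKrullDim_of_isAffineOpen (hU.basicOpen g)]
  exact ringKrullDim_eq_of_ringEquiv
    (IsLocalization.algEquiv (Submonoid.powers g) Γ(X, X.basicOpen g) _).toRingEquiv

theorem appLE_injective_of_isDominant {X Y : Scheme.{u}} [IsIntegral X] [IsIntegral Y] (f : X ⟶ Y)
    [IsDominant f] [QuasiCompact f] {V : Y.Opens} {U : X.Opens} [Nonempty U] (h : U ≤ f ⁻¹ᵁ V) :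
    Function.Injective (f.appLE V U h) := by
  have : IsSchemeTheoreticallyDominant f := .of_isDominant f
  exact (map_injective_of_isIntegral X (homOfLE h)).comp (f.app_injective V)

/-- The transcendence degree of the function field of `X` over `Γ(Y, V)`, for an open `V` of `Y`
whose preimage is nonempty. For `f` dominant of finite type between integral schemes this is the
dimension of the generic fibre of `f`. -/
noncomputable def functionFieldTrdeg {X Y : Scheme.{u}} [IsIntegral X] (f : X ⟶ Y) (V : Y.Opens)
    [Nonempty (f ⁻¹ᵁ V)] : ℕ :=
  letI := (f.app V ≫ X.germToFunctionField (f ⁻¹ᵁ V)).hom.toAlgebra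
  Cardinal.toNat (Algebra.trdeg Γ(Y, V) X.functionField)

theorem exists_forall_topologicalKrullDim_inf_preimage_basicOpen_eq {X Y : Scheme.{u}}
    [IsIntegral X] [IsIntegral Y] (f : X ⟶ Y) [IsDominant f] [LocallyOfFiniteType f]
    [QuasiCompact f] {V : Y.Opens} (hV : IsAffineOpen V) [Nonempty V] [Nonempty (f ⁻¹ᵁ V)]
    {U : X.Opens} (hU : IsAffineOpen U) [Nonempty U] (hUV : U ≤ f ⁻¹ᵁ V) :
    ∃ s : Γ(Y, V), s ≠ 0 ∧ ∀ t : Γ(Y, V), s ∣ t →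
      topologicalKrullDim (U ⊓ f ⁻¹ᵁ Y.basicOpen t : X.Opens) = ringKrullDim
        (Localization.Away (C t : MvPolynomial (Fin (functionFieldTrdeg f V)) Γ(Y, V))) := by
  let ψ := f.app V ≫ X.germToFunctionField (f ⁻¹ᵁ V)
  algebraize [(f.appLE V U hUV).hom, ψ.hom]
  have : Algebra.FiniteType Γ(Y, V) Γ(X, U) := f.finiteType_appLE hV hU hUV
  have : FaithfulSMul Γ(Y, V) Γ(X, U) :=
    (faithfulSMul_iff_algebraMap_injective _ _).mpr (appLE_injective_of_isDominant f hUV)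
  have : IsFractionRing Γ(X, U) X.functionField :=
    functionField_isFractionRing_of_isAffineOpen X U hU
  have hψ : ψ = f.appLE V U hUV ≫ X.germToFunctionField U := by
    rw [Scheme.Hom.appLE, Category.assoc]
    exact congrArg (f.app V ≫ ·) (X.presheaf.germ_res _ _ _).symm
  have : IsScalarTower Γ(Y, V) Γ(X, U) X.functionField :=
    .of_algebraMap_eq' (congrArg CommRingCat.Hom.hom hψ)
  have htrdeg : Cardinal.toNat (Algebra.trdeg Γ(Y, V) Γ(X, U)) = functionFieldTrdeg f V :=
    congrArg Cardinal.toNat (trdeg_eq_trdeg_of_isFractionRing _ _ X.functionField)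
  obtain ⟨s, hs, hdim⟩ := exists_forall_ringKrullDim_localization_away_eq Γ(Y, V) Γ(X, U)
  refine ⟨s, hs, fun t hst ↦ ?_⟩
  rw [← Scheme.basicOpen_appLE f U V hUV t, topologicalKrullDim_basicOpen_of_isAffineOpen hU,
    ← htrdeg]
  exact hdim t hst

section

variable {X Y : Scheme.{u}} [IsIntegral X] [IsIntegral Y] (f : X ⟶ Y) [IsDominant f]
    [LocallyOfFiniteType f] [QuasiCompact f] {V : Y.Opens} [Nonempty V] [Nonempty (f ⁻¹ᵁ V)]

theorem exists_forall_topologicalKrullDim_preimage_basicOpen_le (hV : IsAffineOpen V) :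
    ∃ s : Γ(Y, V), s ≠ 0 ∧ ∀ t : Γ(Y, V), s ∣ t →
      topologicalKrullDim (f ⁻¹ᵁ Y.basicOpen t) ≤ ringKrullDim
        (Localization.Away (C t : MvPolynomial (Fin (functionFieldTrdeg f V)) Γ(Y, V))) := by
  have haff (x : f ⁻¹ᵁ V) : ∃ U : X.Opens, IsAffineOpen U ∧ x.1 ∈ U ∧ U ≤ f ⁻¹ᵁ V :=
    exists_isAffineOpen_mem_and_subset x.2
  choose U hU hxU hUV using haff
  have (x : f ⁻¹ᵁ V) : Nonempty (U x) := ⟨⟨x, hxU x⟩⟩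
  choose s hs hdim using fun x ↦
    exists_forall_topologicalKrullDim_inf_preimage_basicOpen_eq f hV (hU x) (hUV x)
  obtain ⟨F, hF⟩ := (f.isCompact_preimage hV.isCompact).elim_nhds_subcover'
    (fun x hx ↦ U ⟨x, hx⟩) fun x hx ↦ (U ⟨x, hx⟩).isOpen.mem_nhds (hxU ⟨x, hx⟩)
  refine ⟨∏ x ∈ F, s x, Finset.prod_ne_zero_iff.mpr fun x _ ↦ hs x, fun t ht ↦ ?_⟩
  refine topologicalKrullDim_le_of_le_iSup (U := fun x : F ↦ U x) ?_ fun x ↦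
    (hdim x t ((Finset.dvd_prod_of_mem s x.2).trans ht)).le
  intro x hx
  obtain ⟨y, hy, hxy⟩ := Set.mem_iUnion₂.mp (hF (Y.basicOpen_le t hx))
  exact Opens.mem_iSup.mpr ⟨⟨y, hy⟩, hxy⟩

theorem exists_forall_le_topologicalKrullDim (hV : IsAffineOpen V) {W : X.Opens}
    (hW : (W : Set X).Nonempty) (hWV : W ≤ f ⁻¹ᵁ V) :
    ∃ s : Γ(Y, V), s ≠ 0 ∧ ∀ t : Γ(Y, V), s ∣ t → ringKrullDim
      (Localization.Away (C t : MvPolynomial (Fin (functionFieldTrdeg f V)) Γ(Y, V))) ≤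
        topologicalKrullDim W := by
  obtain ⟨x, hx⟩ := hW
  obtain ⟨U, hU, hxU, hUW⟩ := exists_isAffineOpen_mem_and_subset hx
  have : Nonempty U := ⟨⟨x, hxU⟩⟩
  obtain ⟨s, hs, hdim⟩ := exists_forall_topologicalKrullDim_inf_preimage_basicOpen_eq f hV hU
    (hUW.trans hWV)
  exact ⟨s, hs, fun t ht ↦ (hdim t ht).ge.trans
    (topologicalKrullDim_mono (inf_le_left.trans hUW))⟩

end

theorem exists_nonempty_open_genericallyDimensional_preimage {X Y : Scheme.{u}}
    [IsIntegral X] [IsIntegral Y] (f : X ⟶ Y) [IsDominant f] [LocallyOfFiniteType f]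
    [QuasiCompact f] :
    ∃ V : Y.Opens, (V : Set Y).Nonempty ∧ GenericallyDimensional (f ⁻¹ᵁ V) := by
  obtain ⟨V, hV, hyV, -⟩ := exists_isAffineOpen_mem_and_subset
    (Opens.mem_top (Classical.arbitrary Y))
  obtain ⟨x, hxV⟩ := f.denseRange.exists_mem_open V.isOpen ⟨_, hyV⟩
  have : Nonempty V := ⟨⟨_, hyV⟩⟩
  have : Nonempty (f ⁻¹ᵁ V) := ⟨⟨x, hxV⟩⟩
  obtain ⟨r, hr, hmin⟩ := exists_forall_ringKrullDim_localization_away_C_eq Γ(Y, V)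
    (Fin (functionFieldTrdeg f V))
  obtain ⟨s, hs, hupper⟩ := exists_forall_topologicalKrullDim_preimage_basicOpen_le f hV
  refine ⟨Y.basicOpen (r * s), ?_, genericallyDimensional_toScheme fun W hWV hW ↦ ?_⟩
  · rw [← Opens.ne_bot_iff_nonempty, Ne, basicOpen_eq_bot_iff]
    exact mul_ne_zero hr hs
  · obtain ⟨s', hs', hlower⟩ := exists_forall_le_topologicalKrullDim f hV hW
      (hWV.trans (f.preimage_mono (Y.basicOpen_le _)))
    calc topologicalKrullDim (f ⁻¹ᵁ Y.basicOpen (r * s))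
      _ ≤ ringKrullDim (Localization.Away (C (r * s))) := hupper _ (dvd_mul_left s r)
      _ = ringKrullDim (Localization.Away (C (r * s'))) := by
        rw [hmin _ (mul_ne_zero hr hs) (dvd_mul_right r s),
          hmin _ (mul_ne_zero hr hs') (dvd_mul_right r s')]
      _ ≤ topologicalKrullDim W := hlower _ (dvd_mul_left s' r)

theorem isIntegral_image {X Y : Scheme.{u}} (f : X ⟶ Y) [IsIntegral X] [QuasiCompact f] :
    IsIntegral f.image where
  nonempty := ⟨f.toImage (Classical.arbitrary X)⟩
  component_integral U hU := by
    obtain ⟨x, hx⟩ := f.toImage.denseRange.exists_mem_open U.isOpen (Set.nonempty_coe_sort.mp hU)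
    have : Nonempty (f.toImage ⁻¹ᵁ U) := ⟨⟨x, hx⟩⟩
    have : Function.Injective (f.toImage.app U) :=
      TopCat.Presheaf.app_injective_of_stalkFunctor_map_injective (F := f.image.sheaf)
        f.toImage.c U fun x _ ↦ f.stalkFunctor_toImage_injective x
    exact this.isDomain (f.toImage.app U).hom

theorem exists_isIntegral_isClosedImmersion_surjective (X : Scheme.{u}) [IrreducibleSpace X] :
    ∃ (X' : Scheme.{u}) (i : X' ⟶ X), IsIntegral X' ∧ IsClosedImmersion i ∧ Surjective i := by
  let g := X.fromSpecResidueField (genericPoint X)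
  refine ⟨g.image, g.imageι, isIntegral_image g, inferInstance, ⟨?_⟩⟩
  have hmem : genericPoint X ∈ Set.range g.imageι := by
    obtain ⟨x, hx⟩ : genericPoint X ∈ Set.range g := by
      simp [g, Scheme.range_fromSpecResidueField]
    exact ⟨g.toImage x, by rw [← Scheme.Hom.comp_apply, Scheme.Hom.toImage_imageι, hx]⟩
  rw [← Set.range_eq_univ, ← Set.univ_subset_iff, ← (genericPoint_spec X).def]
  exact closure_minimal (Set.singleton_subset_iff.mpr hmem)
    g.imageι.isClosedEmbedding.isClosed_range

theorem exists_preimage_nonempty_genericallyDimensional_preimage {X Y : Scheme.{u}} [IsIntegral X]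
    (f : X ⟶ Y) [LocallyOfFiniteType f] [QuasiCompact f] :
    ∃ V : Y.Opens, (f ⁻¹ᵁ V : Set X).Nonempty ∧ GenericallyDimensional (f ⁻¹ᵁ V) := by
  have := isIntegral_image f
  have hf : f.toImage ≫ f.imageι = f := f.toImage_imageι
  have : LocallyOfFiniteType (f.toImage ≫ f.imageι) := by rwa [hf]
  have : LocallyOfFiniteType f.toImage := locallyOfFiniteType_of_comp f.toImage f.imageι
  obtain ⟨V', hV', hdim⟩ := exists_nonempty_open_genericallyDimensional_preimage f.toImage
  obtain ⟨V, hV, hVV'⟩ := f.imageι.isClosedEmbedding.isInducing.isOpen_iff.mp V'.isOpen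
  obtain rfl : f.imageι ⁻¹ᵁ ⟨V, hV⟩ = V' := Opens.ext hVV'
  have hpre : f.toImage ⁻¹ᵁ f.imageι ⁻¹ᵁ ⟨V, hV⟩ = f ⁻¹ᵁ ⟨V, hV⟩ := by
    rw [← Scheme.Hom.comp_preimage, hf]
  obtain ⟨x, hx⟩ := f.toImage.denseRange.exists_mem_open (f.imageι ⁻¹ᵁ ⟨V, hV⟩).isOpen hV'
  exact ⟨⟨V, hV⟩, ⟨x, hpre.le hx⟩, hpre ▸ hdim⟩

theorem exists_nonempty_open_genericallyDimensional_general {X Y : Scheme.{u}}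
    [IrreducibleSpace X] (f : X ⟶ Y) [LocallyOfFiniteType f] [QuasiCompact f] :
    ∃ V : Y.Opens, (f ⁻¹ᵁ V : Set X).Nonempty ∧ GenericallyDimensional (pullback f V.ι) := by
  obtain ⟨X', i, _, _, _⟩ := exists_isIntegral_isClosedImmersion_surjective X
  obtain ⟨V, ⟨x, hx⟩, hdim⟩ := exists_preimage_nonempty_genericallyDimensional_preimage (i ≫ f)
  have : Surjective (i ∣_ f ⁻¹ᵁ V) :=
    IsZariskiLocalAtTarget.restrict (P := @Surjective) inferInstance _
  have hX : GenericallyDimensional (f ⁻¹ᵁ V) :=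
    .of_isClosedImmersion_of_surjective (i ∣_ f ⁻¹ᵁ V) hdim
  exact ⟨V, ⟨i x, hx⟩, hX.of_homeomorph (Scheme.homeoOfIso (pullbackRestrictIsoRestrict f V).symm)⟩

/-- Lemma 3.2 of Hu–Yang. Let `X` and `Y` be irreducible excellent
Noetherian schemes and `f : X → Y` a dominant morphism of finite type. Then there
exists a nonempty Zariski open subscheme `V` of `Y` such that `X_V = X ×_Y V` is
generically dimensional. -/
theorem exists_nonempty_open_genericallyDimensional
    (X Y : Scheme.{u}) [IrreducibleSpace X] [IrreducibleSpace Y]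
    [IsNoetherian X] [IsNoetherian Y] [IsExcellent X] [IsExcellent Y]
    (f : X ⟶ Y) [IsDominant f] [LocallyOfFiniteType f] [QuasiCompact f] :
    ∃ V : Y.Opens, (V : Set Y).Nonempty ∧
      GenericallyDimensional (pullback f V.ι) := by
  obtain ⟨V, ⟨x, hx⟩, hdim⟩ := exists_nonempty_open_genericallyDimensional_general f
  exact ⟨V, ⟨f x, hx⟩, hdim⟩
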